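/- arXiv:1111.2365 — 2 statements merged into one kernel-verified Lean document; each statement's English description precedes it below -/
import Mathlib

section
/- Let n ≥ 1 and d ≥ 2 be integers and let P₁, …, Pₙ ∈ ℂ[x₁,…,xₙ] be polynomials, each of total degree at most d, with the degree-d homogeneous component of some Pᵢ nonzero. Suppose the polynomial vector field P = (P₁,…,Pₙ) on ℂⁿ is complete, i.e. there is a map Φ : ℂ × ℂⁿ → ℂⁿ with Φ(0,p) = p for all p and such that for every p ∈ ℂⁿ the map T ↦ Φ(T,p) has complex derivative P(Φ(T,p)) at every T ∈ ℂ. Then the top-degree homogeneous component of P is not a multiple of the radial vector field: there is no polynomial Q ∈ ℂ[x₁,…,xₙ] such that the degree-d homogeneous component of Pᵢ equals Q·xᵢ for every i = 1,…,n. -/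
open MvPolynomial

/-!
Substitute `x = z⁻¹ • w` and slow time down to `s`, with `dT = z ^ (d - 2) ds`. If the top-degree
part of the field is `Q` times the radial field, the equation becomes `z' = -Q(w)`, `w' = R(z, w)`
with `R` polynomial, hence regular across `z = 0`, the points at infinity. If `Q(v) ≠ 0` and
`v ≠ 0`, the solution starting at `z = 0`, `w = v` leaves `z = 0` at once, and from then on it is a
trajectory of the original field. Since `d ≥ 2`, the time `T` it takes to come in from infinity is
finite, so by uniqueness a complete trajectory would be unbounded near a finite time.
-/

open Set Filter Topology

section IntegralCurves

variable {E : Type*} [NormedAddCommGroup E] [NormedSpace ℝ E]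

open Manifold in
theorem eqOn_Ioo_of_hasDerivAt_of_contDiff {F : E → E} (hF : ContDiff ℝ 1 F) {f g : ℝ → E}
    {a b t₀ : ℝ} (ht₀ : t₀ ∈ Ioo a b) (hf : ∀ t ∈ Ioo a b, HasDerivAt f (F (f t)) t)
    (hg : ∀ t ∈ Ioo a b, HasDerivAt g (F (g t)) t) (heq : f t₀ = g t₀) :
    EqOn f g (Ioo a b) :=
  isMIntegralCurveOn_Ioo_eqOn_of_contMDiff_boundaryless (I := 𝓘(ℝ, E)) (v := F) ht₀
    (contMDiff_vectorSpace_iff_contDiff.mpr hF)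
    (fun t ht ↦ (hf t ht).hasFDerivAt.hasMFDerivAt.hasMFDerivWithinAt)
    (fun t ht ↦ (hg t ht).hasFDerivAt.hasMFDerivAt.hasMFDerivWithinAt) heq

theorem eqOn_Ioo_of_hasDerivAt_of_contDiff_driven {D : Type*} [NormedAddCommGroup D]
    [NormedSpace ℝ D] {V : D → D} {B : D × E → E} (hV : ContDiff ℝ 1 V) (hB : ContDiff ℝ 1 B)
    {α : ℝ → D} {f g : ℝ → E} {a b t₀ : ℝ} (ht₀ : t₀ ∈ Ioo a b)
    (hα : ∀ t ∈ Ioo a b, HasDerivAt α (V (α t)) t)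
    (hf : ∀ t ∈ Ioo a b, HasDerivAt f (B (α t, f t)) t)
    (hg : ∀ t ∈ Ioo a b, HasDerivAt g (B (α t, g t)) t) (heq : f t₀ = g t₀) :
    EqOn f g (Ioo a b) := by
  have hpair : EqOn (fun t ↦ (α t, f t)) (fun t ↦ (α t, g t)) (Ioo a b) :=
    eqOn_Ioo_of_hasDerivAt_of_contDiff (F := fun u ↦ (V u.1, B u))
      ((hV.comp contDiff_fst).prodMk hB) ht₀
      (fun t ht ↦ (hα t ht).prodMk (hf t ht)) (fun t ht ↦ (hα t ht).prodMk (hg t ht))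
      (by simp only [heq])
  exact fun t ht ↦ congrArg Prod.snd (hpair ht)

end IntegralCurves

section RadialAtInfinity

variable {𝕜 E : Type*} [RCLike 𝕜] [NormedAddCommGroup E] [NormedSpace ℝ E]

/-- The vector field `(z, w, τ)' = (-q w, R (z, w), z ^ m)`. It describes, near the points at
infinity `z = 0`, a vector field of degree `m + 2` in the coordinates `x = z⁻¹ • w`: `z` is the
scale, `w` the direction, and `τ` records the original time. -/
def fieldAtInfinity (m : ℕ) (q : E → 𝕜) (R : 𝕜 × E → E) (u : 𝕜 × E × 𝕜) : 𝕜 × E × 𝕜 :=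
  (-q u.2.1, R (u.1, u.2.1), u.1 ^ m)

variable {m : ℕ} {q : E → 𝕜} {R : 𝕜 × E → E} {α : ℝ → 𝕜 × E × 𝕜} {s : ℝ}

theorem fieldAtInfinity.contDiff (hq : ContDiff ℝ 1 q) (hR : ContDiff ℝ 1 R) :
    ContDiff ℝ 1 (fieldAtInfinity m q R) := by
  unfold fieldAtInfinity
  fun_prop

theorem fieldAtInfinity.hasDerivAt_scale (hα : HasDerivAt α (fieldAtInfinity m q R (α s)) s) :
    HasDerivAt (fun s ↦ (α s).1) (-q (α s).2.1) s := by
  simpa [fieldAtInfinity] using hα.hasFDerivAt.fst.hasDerivAt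

theorem fieldAtInfinity.hasDerivAt_direction (hα : HasDerivAt α (fieldAtInfinity m q R (α s)) s) :
    HasDerivAt (fun s ↦ (α s).2.1) (R ((α s).1, (α s).2.1)) s := by
  simpa [fieldAtInfinity] using hα.hasFDerivAt.snd.fst.hasDerivAt

theorem fieldAtInfinity.hasDerivAt_time (hα : HasDerivAt α (fieldAtInfinity m q R (α s)) s) :
    HasDerivAt (fun s ↦ (α s).2.2) ((α s).1 ^ m) s := by
  simpa [fieldAtInfinity] using hα.hasFDerivAt.snd.snd.hasDerivAt

theorem exists_curve_leaving_infinity [CompleteSpace E] (hq : ContDiff ℝ 1 q)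
    (hR : ContDiff ℝ 1 R) {v : E} (hv : q v ≠ 0) :
    ∃ α : ℝ → 𝕜 × E × 𝕜, α 0 = (0, v, 0) ∧ ∃ ε > 0,
      (∀ s ∈ Ico 0 ε, HasDerivAt α (fieldAtInfinity m q R (α s)) s) ∧
      ∀ s ∈ Ioo 0 ε, (α s).1 ≠ 0 := by
  obtain ⟨α, hα0, r, hr, hα⟩ := (fieldAtInfinity.contDiff (m := m) hq hR).contDiffAt
    (x := ((0 : 𝕜), v, (0 : 𝕜)))
    |>.exists_forall_mem_closedBall_exists_eq_forall_mem_Ioo_hasDerivAt₀ 0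
  have hz : HasDerivAt (fun s ↦ (α s).1) (-q v) 0 := by
    simpa only [hα0] using fieldAtInfinity.hasDerivAt_scale (hα 0 (by simpa using hr))
  have hne : ∀ᶠ s in 𝓝[>] (0 : ℝ), (α s).1 ≠ 0 :=
    (hz.eventually_ne (neg_ne_zero.mpr hv)).filter_mono
      (nhdsWithin_mono _ fun s (hs : 0 < s) ↦ hs.ne')
  obtain ⟨δ, hδ, hαδ⟩ := mem_nhdsGT_iff_exists_Ioo_subset.mp hne
  refine ⟨α, hα0, min r δ, lt_min hr hδ, fun s hs ↦ hα s ⟨?_, ?_⟩,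
    fun s hs ↦ hαδ ⟨hs.1, hs.2.trans_le (min_le_right _ _)⟩⟩
  · linarith [hs.1]
  · linarith [hs.2, min_le_left r δ]

variable [NormedSpace 𝕜 E]

variable (𝕜) in
/-- A complete vector field on `E`: every point lies on an integral curve defined for
all times `T : 𝕜`. -/
def IsCompleteVectorField (F : E → E) : Prop :=
  ∀ p, ∃ γ : 𝕜 → E, γ 0 = p ∧ ∀ T, HasDerivAt γ (F (γ T)) T

/-- A vector field of degree `m + 2` whose leading part at infinity is the radial field multiplied
by the function `q`, with a remainder `R` that extends differentiably across `z = 0`. -/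
structure IsRadialAtInfinity (m : ℕ) (F : E → E) (q : E → 𝕜) (R : 𝕜 × E → E) : Prop where
  contDiff_coeff : ContDiff ℝ 1 q
  contDiff_remainder : ContDiff ℝ 1 R
  pow_smul_inv_smul : ∀ (z : 𝕜) (w : E), z ≠ 0 →
    z ^ (m + 2) • F (z⁻¹ • w) = q w • w + z • R (z, w)

variable [IsScalarTower ℝ 𝕜 E] {F : E → E}

theorem IsRadialAtInfinity.hasDerivAt_inv_smul (h : IsRadialAtInfinity m F q R)
    (hα : HasDerivAt α (fieldAtInfinity m q R (α s)) s) (hz : (α s).1 ≠ 0) :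
    HasDerivAt (fun s ↦ (α s).1⁻¹ • (α s).2.1)
      ((α s).1 ^ m • F ((α s).1⁻¹ • (α s).2.1)) s := by
  have hquot : HasDerivAt (fun s ↦ (α s).1⁻¹ • (α s).2.1)
      ((α s).1⁻¹ • R ((α s).1, (α s).2.1) + (- -q (α s).2.1 / (α s).1 ^ 2) • (α s).2.1) s :=
    ((fieldAtInfinity.hasDerivAt_scale hα).inv hz).smul (fieldAtInfinity.hasDerivAt_direction hα)
  convert hquot using 1
  set z := (α s).1
  set w := (α s).2.1
  calc z ^ m • F (z⁻¹ • w)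
      = (z ^ 2)⁻¹ • z ^ (m + 2) • F (z⁻¹ • w) := by
        rw [smul_smul, pow_add, mul_comm (z ^ m), inv_mul_cancel_left₀ (pow_ne_zero 2 hz)]
    _ = (z ^ 2)⁻¹ • (q w • w + z • R (z, w)) := by rw [h.pow_smul_inv_smul z w hz]
    _ = z⁻¹ • R (z, w) + (- -q w / z ^ 2) • w := by
        rw [smul_add, smul_smul, smul_smul, add_comm]
        congr 2 <;> field_simp

theorem fieldAtInfinity.hasDerivAt_comp_time_sub {γ : 𝕜 → E}
    (hγ : ∀ T, HasDerivAt γ (F (γ T)) T) (c : 𝕜)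
    (hα : HasDerivAt α (fieldAtInfinity m q R (α s)) s) :
    HasDerivAt (fun s ↦ γ ((α s).2.2 - c)) ((α s).1 ^ m • F (γ ((α s).2.2 - c))) s :=
  (hγ _).scomp s ((fieldAtInfinity.hasDerivAt_time hα).sub_const c)

theorem IsRadialAtInfinity.exists_continuousAt_eqOn_inv_smul (h : IsRadialAtInfinity m F q R)
    (hF : ContDiff ℝ 1 F) (hcomplete : IsCompleteVectorField 𝕜 F) {ε : ℝ} (hε : 0 < ε)
    (hα : ∀ s ∈ Ico 0 ε, HasDerivAt α (fieldAtInfinity m q R (α s)) s)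
    (hz : ∀ s ∈ Ioo 0 ε, (α s).1 ≠ 0) :
    ∃ y : ℝ → E, ContinuousAt y 0 ∧ EqOn (fun s ↦ (α s).1⁻¹ • (α s).2.1) y (Ioo 0 ε) := by
  obtain ⟨b, hb⟩ := exists_between hε
  obtain ⟨γ, hγ0, hγ⟩ := hcomplete ((α b).1⁻¹ • (α b).2.1)
  have hα' : ∀ s ∈ Ioo 0 ε, HasDerivAt α (fieldAtInfinity m q R (α s)) s :=
    fun s hs ↦ hα s (Ioo_subset_Ico_self hs)
  refine ⟨fun s ↦ γ ((α s).2.2 - (α b).2.2),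
    (fieldAtInfinity.hasDerivAt_comp_time_sub hγ _ (hα 0 ⟨le_rfl, hε⟩)).continuousAt, ?_⟩
  exact eqOn_Ioo_of_hasDerivAt_of_contDiff_driven (B := fun u ↦ u.1.1 ^ m • F u.2)
    (fieldAtInfinity.contDiff h.contDiff_coeff h.contDiff_remainder) (by fun_prop) hb hα'
    (fun s hs ↦ h.hasDerivAt_inv_smul (hα' s hs) (hz s hs))
    (fun s hs ↦ fieldAtInfinity.hasDerivAt_comp_time_sub hγ _ (hα' s hs))
    (by simp only [sub_self, hγ0])

theorem IsRadialAtInfinity.smul_eq_zero_of_isCompleteVectorField [CompleteSpace E]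
    (h : IsRadialAtInfinity m F q R) (hF : ContDiff ℝ 1 F)
    (hcomplete : IsCompleteVectorField 𝕜 F) (v : E) : q v • v = 0 := by
  refine smul_eq_zero.mpr (or_iff_not_imp_left.mpr fun hv ↦ ?_)
  obtain ⟨α, hα0, ε, hε, hα, hz⟩ :=
    exists_curve_leaving_infinity (m := m) h.contDiff_coeff h.contDiff_remainder hv
  obtain ⟨y, hy, hxy⟩ := h.exists_continuousAt_eqOn_inv_smul hF hcomplete hε hα hz
  have hα_cont : ContinuousAt α 0 := (hα 0 ⟨le_rfl, hε⟩).continuousAt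
  have hw : Tendsto (fun s ↦ (α s).2.1) (𝓝[>] 0) (𝓝 v) := by
    simpa only [hα0] using hα_cont.snd.fst.tendsto.mono_left nhdsWithin_le_nhds
  have hzy : Tendsto (fun s ↦ (α s).1 • y s) (𝓝[>] 0) (𝓝 0) := by
    simpa only [hα0, zero_smul] using
      (hα_cont.fst.tendsto.smul hy.tendsto).mono_left nhdsWithin_le_nhds
  refine tendsto_nhds_unique hw (hzy.congr' ?_)
  filter_upwards [Ioo_mem_nhdsGT hε] with s hs
  rw [← hxy hs, smul_inv_smul₀ (hz s hs)]

end RadialAtInfinity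

section PolynomialFields

theorem eval_smul_of_isHomogeneous {σ R : Type*} [CommSemiring R] {p : MvPolynomial σ R} {k : ℕ}
    (hp : p.IsHomogeneous k) (c : R) (w : σ → R) : eval (c • w) p = c ^ k * eval w p := by
  rw [eval_eq, eval_eq, Finset.mul_sum]
  refine Finset.sum_congr rfl fun m hm ↦ ?_
  have hdegree : ∑ i ∈ m.support, m i = k :=
    by_contra fun hne ↦ mem_support_iff.mp hm (hp.coeff_eq_zero hne)
  simp only [Pi.smul_apply, smul_eq_mul, mul_pow, Finset.prod_mul_distrib,
    Finset.prod_pow_eq_pow_sum, hdegree]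
  ring

theorem sum_homogeneousComponent_of_totalDegree_le {σ R : Type*} [CommSemiring R]
    {p : MvPolynomial σ R} {d : ℕ} (hp : p.totalDegree ≤ d) :
    ∑ k ∈ Finset.range (d + 1), homogeneousComponent k p = p := by
  conv_rhs => rw [← sum_homogeneousComponent p]
  refine (Finset.sum_subset (Finset.range_mono (by omega)) fun k _ hk ↦ ?_).symm
  exact homogeneousComponent_eq_zero _ _ (by simpa [Nat.succ_le_iff] using hk)

theorem contDiff_eval {𝕜 A ι : Type*} [NontriviallyNormedField 𝕜] [NormedCommRing A]
    [NormedAlgebra 𝕜 A] [Fintype ι] {n : WithTop ℕ∞} (p : MvPolynomial ι A) :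
    ContDiff 𝕜 n fun w : ι → A ↦ eval w p := by
  simp only [eval_eq]
  fun_prop

/-- The remainder `R(z, w)` in `z ^ d * p(z⁻¹ w) = p_d(w) + z * R(z, w)`, where `p_d` is the
degree-`d` component of a polynomial `p` of degree at most `d`. -/
noncomputable def remainderAtInfinity {σ K : Type*} [CommSemiring K] (d : ℕ)
    (p : MvPolynomial σ K) (u : K × (σ → K)) : K :=
  ∑ k ∈ Finset.range d, u.1 ^ (d - 1 - k) * eval u.2 (homogeneousComponent k p)

theorem contDiff_remainderAtInfinity {𝕜 A ι : Type*} [NontriviallyNormedField 𝕜]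
    [NormedCommRing A] [NormedAlgebra 𝕜 A] [Fintype ι] {n : WithTop ℕ∞} (d : ℕ)
    (p : MvPolynomial ι A) : ContDiff 𝕜 n (remainderAtInfinity d p) :=
  ContDiff.sum fun _ _ ↦ (contDiff_fst.pow _).mul ((contDiff_eval _).comp contDiff_snd)

theorem pow_mul_eval_inv_smul {σ K : Type*} [Field K] {p : MvPolynomial σ K} {d : ℕ}
    (hp : p.totalDegree ≤ d) {z : K} (hz : z ≠ 0) (w : σ → K) :
    z ^ d * eval (z⁻¹ • w) p =
      eval w (homogeneousComponent d p) + z * remainderAtInfinity d p (z, w) := by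
  have hcomponent (k : ℕ) : eval (z⁻¹ • w) (homogeneousComponent k p) =
      (z ^ k)⁻¹ * eval w (homogeneousComponent k p) := by
    rw [eval_smul_of_isHomogeneous (homogeneousComponent_isHomogeneous k p), inv_pow]
  have hpow {k : ℕ} (hk : k < d) : z ^ d = z * z ^ (d - 1 - k) * z ^ k := by
    rw [← pow_succ', ← pow_add]; congr 1; omega
  conv_lhs => rw [← sum_homogeneousComponent_of_totalDegree_le hp]
  simp only [map_sum, hcomponent]
  rw [Finset.sum_range_succ, add_comm, mul_add, mul_inv_cancel_left₀ (pow_ne_zero d hz),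
    remainderAtInfinity, Finset.mul_sum, Finset.mul_sum]
  congr 1
  refine Finset.sum_congr rfl fun k hk ↦ ?_
  rw [hpow (Finset.mem_range.mp hk)]
  field_simp

variable {𝕜 ι : Type*} [RCLike 𝕜] [Fintype ι]

theorem isRadialAtInfinity_eval {m : ℕ} {P : ι → MvPolynomial ι 𝕜} {Q : MvPolynomial ι 𝕜}
    (hdeg : ∀ i, (P i).totalDegree ≤ m + 2)
    (hQ : ∀ i, homogeneousComponent (m + 2) (P i) = Q * X i) :
    IsRadialAtInfinity m (fun x i ↦ eval x (P i)) (fun w ↦ eval w Q)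
      (fun u i ↦ remainderAtInfinity (m + 2) (P i) u) where
  contDiff_coeff := contDiff_eval Q
  contDiff_remainder := contDiff_pi.mpr fun i ↦ contDiff_remainderAtInfinity _ (P i)
  pow_smul_inv_smul z w hz := by
    ext i
    simpa [hQ] using pow_mul_eval_inv_smul (hdeg i) hz w

theorem stmt_4_general {d : ℕ} (hd : 2 ≤ d) {P : ι → MvPolynomial ι 𝕜}
    (hdeg : ∀ i, (P i).totalDegree ≤ d) (htop : ∃ i, homogeneousComponent d (P i) ≠ 0)
    (hcomplete : IsCompleteVectorField 𝕜 fun x i ↦ eval x (P i)) :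
    ¬ ∃ Q : MvPolynomial ι 𝕜, ∀ i, homogeneousComponent d (P i) = Q * X i := by
  rintro ⟨Q, hQ⟩
  obtain ⟨i, hi⟩ := htop
  obtain ⟨m, rfl⟩ := Nat.exists_eq_add_of_le' hd
  have hvanish : ∀ v : ι → 𝕜, eval v Q • v = 0 :=
    (isRadialAtInfinity_eval hdeg hQ).smul_eq_zero_of_isCompleteVectorField
      (contDiff_pi.mpr fun j ↦ contDiff_eval (P j)) hcomplete
  refine hi ((hQ i).trans (MvPolynomial.funext fun v ↦ ?_))
  simpa using congrFun (hvanish v) i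

end PolynomialFields

/-- the top-degree homogeneous component of a complete polynomial
vector field of degree `d ≥ 2` on `ℂⁿ` is not a multiple of the radial vector
field. -/
theorem stmt_4 (n d : ℕ) (hn : 1 ≤ n) (hd : 2 ≤ d)
    (P : Fin n → MvPolynomial (Fin n) ℂ)
    (hdeg : ∀ i, (P i).totalDegree ≤ d)
    (htop : ∃ i, homogeneousComponent d (P i) ≠ 0)
    (Φ : ℂ → (Fin n → ℂ) → (Fin n → ℂ))
    (hΦ0 : ∀ p, Φ 0 p = p)
    (hflow : ∀ (p : Fin n → ℂ) (T : ℂ) (i : Fin n),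
      HasDerivAt (fun s => Φ s p i) (eval (Φ T p) (P i)) T) :
    ¬ ∃ Q : MvPolynomial (Fin n) ℂ,
        ∀ i, homogeneousComponent d (P i) = Q * X i :=
  stmt_4_general hd hdeg htop fun p ↦
    ⟨fun T ↦ Φ T p, hΦ0 p, fun T ↦ hasDerivAt_pi.mpr (hflow p T)⟩
end

section
/- Let n ≥ 1 and let F : ℂⁿ → ℂⁿ be holomorphic on all of ℂⁿ. Let r > 0, s > 0, T₀ ∈ ℂ, and let S ⊆ ℂⁿ be a set such that for every p ∈ S there exists a map ψ : ℂ → ℂⁿ with ψ(0) = p and such that ψ has complex derivative F(ψ(T)) at every T in the open disc of radius r about 0. Suppose φ : ℂ → ℂⁿ has complex derivative F(φ(T)) at every T in the open disc B(T₀,s) of radius s about T₀, and φ(T) ∈ S for every T ∈ B(T₀,s). Then there exists Φ : ℂ → ℂⁿ which has complex derivative F(Φ(T)) at every T in the open disc B(T₀, s+r) and which agrees with φ on B(T₀,s). -/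
open Metric

/-!
A locally Lipschitz autonomous equation has at most one solution with a given value at a given
point of a convex set of times: restrict two solutions to a segment and apply uniqueness for real
ODEs. Given a solution `φ` on a convex set `U`, translate to each `T ∈ U` the local solution
starting at `φ T`, which lives on `ball T r` and agrees with `φ` on `ball T r ∩ U`. If two such
balls meet, they both contain the midpoint of their centres, which lies in `U` by convexity. There
the two local solutions agree with `φ`, hence they agree on the whole convex intersection, and all
of them glue to a solution on the `r`-thickening of `U`. Holomorphic vector fields are locally
Lipschitz by the Schwarz lemma.
-/

open Set

theorem locallyLipschitz_of_differentiable_complex {E G : Type*} [NormedAddCommGroup E]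
    [NormedSpace ℂ E] [NormedAddCommGroup G] [NormedSpace ℂ G] {F : E → G}
    (hF : Differentiable ℂ F) : LocallyLipschitz F := by
  intro x
  obtain ⟨ε, hε, hFx⟩ := Metric.continuousAt_iff.1 hF.continuous.continuousAt 1 one_pos
  refine ⟨(2 / (ε / 2)).toNNReal, ball x (ε / 4), ball_mem_nhds x (by positivity),
    LipschitzOnWith.of_dist_le_mul fun z hz y hy => ?_⟩
  have ball_y_subset : ball y (ε / 2) ⊆ ball x ε :=
    ball_subset_ball' (by linarith [mem_ball.1 hy])
  have mapsTo_ball : MapsTo F (ball y (ε / 2)) (closedBall (F y) 2) := fun w hw => by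
    have hwx : dist (F w) (F x) < 1 := hFx (ball_y_subset hw)
    have hyx : dist (F y) (F x) < 1 := hFx (ball_y_subset (mem_ball_self (by positivity)))
    exact mem_closedBall.2 (by linarith [dist_triangle_right (F w) (F y) (F x)])
  have z_mem : z ∈ ball y (ε / 2) := mem_ball.2 <| by
    linarith [dist_triangle_right z y x, mem_ball.1 hz, mem_ball.1 hy]
  rw [Real.coe_toNNReal _ (by positivity)]
  exact Complex.dist_le_div_mul_dist_of_mapsTo_ball hF.differentiableOn mapsTo_ball z_mem

theorem midpoint_mem_ball_inter_ball {V : Type*} [NormedAddCommGroup V] [NormedSpace ℝ V]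
    {x y : V} {r : ℝ} (h : (ball x r ∩ ball y r).Nonempty) :
    midpoint ℝ x y ∈ ball x r ∩ ball y r := by
  obtain ⟨z, hzx, hzy⟩ := h
  have dist_lt : dist x y < 2 * r := by
    linarith [dist_triangle_left x y z, mem_ball.1 hzx, mem_ball.1 hzy]
  constructor
  · rw [mem_ball, dist_midpoint_left, Real.norm_ofNat]
    linarith
  · rw [mem_ball, dist_midpoint_right, Real.norm_ofNat]
    linarith

theorem exists_forall_eqOn_of_eqOn_inter {ι α β : Type*} [Nonempty β] {V : ι → Set α}
    {g : ι → α → β} (hg : ∀ i j, EqOn (g i) (g j) (V i ∩ V j)) :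
    ∃ f : α → β, ∀ i, EqOn f (g i) (V i) := by
  classical
  refine ⟨fun x => if h : ∃ i, x ∈ V i then g h.choose x else Classical.arbitrary β,
    fun i x hx => ?_⟩
  have hex : ∃ i, x ∈ V i := ⟨i, hx⟩
  simpa only [dif_pos hex] using hg hex.choose i ⟨hex.choose_spec, hx⟩

section

variable {𝕜 E : Type*} [RCLike 𝕜] [NormedAddCommGroup E] [NormedSpace 𝕜 E]

/-- `f` solves the autonomous equation `f' = F ∘ f` at every point of `U`, where time is real or
complex. The derivative is the full one, not the one within `U`, also when `U` is not open. -/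
def IsSolutionOn (F : E → E) (f : 𝕜 → E) (U : Set 𝕜) : Prop :=
  ∀ T ∈ U, HasDerivAt f (F (f T)) T

namespace IsSolutionOn

variable {F : E → E} {f g : 𝕜 → E} {U : Set 𝕜}

theorem mono {V : Set 𝕜} (hf : IsSolutionOn F f V) (hUV : U ⊆ V) : IsSolutionOn F f U :=
  fun T hT => hf T (hUV hT)

theorem congr_of_isOpen (hf : IsSolutionOn F f U) (hU : IsOpen U) (hgf : EqOn g f U) :
    IsSolutionOn F g U := fun T hT => by
  rw [hgf hT]
  exact (hf T hT).congr_of_eventuallyEq (hgf.eventuallyEq_of_mem (hU.mem_nhds hT))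

theorem comp_sub_const_ball {r : ℝ} (hf : IsSolutionOn F f (ball 0 r)) (c : 𝕜) :
    IsSolutionOn F (fun T => f (T - c)) (ball c r) := fun T hT =>
  (hf (T - c) (by rwa [mem_ball_zero_iff, ← mem_ball_iff_norm])).comp_sub_const T c

theorem eqOn_of_convex (hF : LocallyLipschitz F) (hU : Convex ℝ U) (hf : IsSolutionOn F f U)
    (hg : IsSolutionOn F g U) {a : 𝕜} (ha : a ∈ U) (hfg : f a = g a) : EqOn f g U := by
  intro b hb
  let _ : NormedSpace ℝ E := NormedSpace.restrictScalars ℝ 𝕜 E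
  let γ : ℝ → 𝕜 := AffineMap.lineMap a b
  have γ_mem : MapsTo γ (Icc 0 1) U := hU.mapsTo_lineMap ha hb
  have hasDerivAt_comp_γ {h : 𝕜 → E} (hh : IsSolutionOn F h U) {t : ℝ} (ht : t ∈ Icc 0 1) :
      HasDerivAt (h ∘ γ) ((b - a) • F (h (γ t))) t :=
    (hh (γ t) (γ_mem ht)).scomp t AffineMap.hasDerivAt_lineMap
  have continuousOn_comp_γ {h : 𝕜 → E} (hh : IsSolutionOn F h U) :
      ContinuousOn (h ∘ γ) (Icc 0 1) :=
    fun t ht => (hasDerivAt_comp_γ hh ht).continuousAt.continuousWithinAt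
  let C : Set E := (f ∘ γ) '' Icc 0 1 ∪ (g ∘ γ) '' Icc 0 1
  have isCompact_C : IsCompact C :=
    (isCompact_Icc.image_of_continuousOn (continuousOn_comp_γ hf)).union
      (isCompact_Icc.image_of_continuousOn (continuousOn_comp_γ hg))
  obtain ⟨K, hK⟩ := hF.locallyLipschitzOn.exists_lipschitzOnWith_of_compact isCompact_C
  have eqOn_comp_γ : EqOn (f ∘ γ) (g ∘ γ) (Icc 0 1) :=
    ODE_solution_unique_of_mem_Icc_right (v := fun _ x => (b - a) • F x) (s := fun _ => C)
      (fun _ _ => (lipschitzWith_smul (b - a)).comp_lipschitzOnWith hK)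
      (continuousOn_comp_γ hf)
      (fun t ht => (hasDerivAt_comp_γ hf (Ico_subset_Icc_self ht)).hasDerivWithinAt)
      (fun t ht => .inl (mem_image_of_mem _ (Ico_subset_Icc_self ht)))
      (continuousOn_comp_γ hg)
      (fun t ht => (hasDerivAt_comp_γ hg (Ico_subset_Icc_self ht)).hasDerivWithinAt)
      (fun t ht => .inr (mem_image_of_mem _ (Ico_subset_Icc_self ht)))
      (by simpa [γ] using hfg)
  simpa [γ] using eqOn_comp_γ (right_mem_Icc.2 zero_le_one)

theorem exists_glue {ι : Type*} {V : ι → Set 𝕜} {g : ι → 𝕜 → E} (hV : ∀ i, IsOpen (V i))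
    (hg : ∀ i, IsSolutionOn F (g i) (V i)) (hgg : ∀ i j, EqOn (g i) (g j) (V i ∩ V j)) :
    ∃ f : 𝕜 → E, IsSolutionOn F f (⋃ i, V i) ∧ ∀ i, EqOn f (g i) (V i) := by
  obtain ⟨f, hf⟩ := exists_forall_eqOn_of_eqOn_inter hgg
  refine ⟨f, fun T hT => ?_, hf⟩
  obtain ⟨i, hi⟩ := mem_iUnion.1 hT
  exact (hg i).congr_of_isOpen (hV i) (hf i) T hi

theorem eqOn_ball_inter_ball (hF : LocallyLipschitz F) (hU : Convex ℝ U) {r : ℝ} {φ : 𝕜 → E}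
    {x y : 𝕜} (hx : x ∈ U) (hy : y ∈ U) (hf : IsSolutionOn F f (ball x r))
    (hg : IsSolutionOn F g (ball y r)) (hfφ : EqOn f φ (ball x r ∩ U))
    (hgφ : EqOn g φ (ball y r ∩ U)) : EqOn f g (ball x r ∩ ball y r) := by
  intro z hz
  obtain ⟨mid_mem_x, mid_mem_y⟩ := midpoint_mem_ball_inter_ball ⟨z, hz⟩
  have mid_mem_U : midpoint ℝ x y ∈ U := hU.midpoint_mem hx hy
  have eq_at_mid : f (midpoint ℝ x y) = g (midpoint ℝ x y) :=
    (hfφ ⟨mid_mem_x, mid_mem_U⟩).trans (hgφ ⟨mid_mem_y, mid_mem_U⟩).symm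
  exact eqOn_of_convex hF ((convex_ball x r).inter (convex_ball y r)) (hf.mono inter_subset_left)
    (hg.mono inter_subset_right) ⟨mid_mem_x, mid_mem_y⟩ eq_at_mid hz

end IsSolutionOn

theorem stmt_13_general {F : E → E} (hF : LocallyLipschitz F) {U : Set 𝕜} (hU : Convex ℝ U)
    {r : ℝ} (hr : 0 < r) {φ : 𝕜 → E} (hφ : IsSolutionOn F φ U)
    (hloc : ∀ T ∈ U, ∃ ψ : 𝕜 → E, ψ 0 = φ T ∧ IsSolutionOn F ψ (ball 0 r)) :
    ∃ Φ : 𝕜 → E, IsSolutionOn F Φ (thickening r U) ∧ EqOn Φ φ U := by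
  choose! ψ ψ_zero ψ_sol using hloc
  let g : U → 𝕜 → E := fun c T => ψ c (T - c)
  have g_self (c : U) : g c c = φ c := by simpa only [g, sub_self] using ψ_zero c c.2
  have g_sol (c : U) : IsSolutionOn F (g c) (ball c r) := (ψ_sol c c.2).comp_sub_const_ball c
  have g_eqOn_φ (c : U) : EqOn (g c) φ (ball c r ∩ U) :=
    IsSolutionOn.eqOn_of_convex hF ((convex_ball _ r).inter hU) ((g_sol c).mono inter_subset_left)
      (hφ.mono inter_subset_right) ⟨mem_ball_self hr, c.2⟩ (g_self c)
  obtain ⟨Φ, Φ_sol, Φ_eqOn⟩ := IsSolutionOn.exists_glue (fun _ => isOpen_ball) g_sol fun c d =>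
    IsSolutionOn.eqOn_ball_inter_ball hF hU c.2 d.2 (g_sol c) (g_sol d) (g_eqOn_φ c) (g_eqOn_φ d)
  refine ⟨Φ, ?_, fun T hT => (Φ_eqOn ⟨T, hT⟩ (mem_ball_self hr)).trans (g_self ⟨T, hT⟩)⟩
  rwa [thickening_eq_biUnion_ball, biUnion_eq_iUnion]

end

/-- uniform extension principle for holomorphic ODEs: if every
point of `S` admits a local solution of `ψ' = F(ψ)` on a disc of uniform
radius `r`, and `φ` solves the equation on `B(T₀,s)` with values in `S`, then
`φ` extends to a solution on `B(T₀, s+r)`. -/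
theorem stmt_13 (n : ℕ) (hn : 1 ≤ n) (F : (Fin n → ℂ) → (Fin n → ℂ))
    (hF : Differentiable ℂ F) (r s : ℝ) (hr : 0 < r) (hs : 0 < s)
    (T₀ : ℂ) (S : Set (Fin n → ℂ))
    (hS : ∀ p ∈ S, ∃ ψ : ℂ → (Fin n → ℂ), ψ 0 = p ∧
      ∀ T ∈ ball (0 : ℂ) r, HasDerivAt ψ (F (ψ T)) T)
    (φ : ℂ → (Fin n → ℂ))
    (hφ : ∀ T ∈ ball T₀ s, HasDerivAt φ (F (φ T)) T)
    (hφS : ∀ T ∈ ball T₀ s, φ T ∈ S) :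
    ∃ Φ : ℂ → (Fin n → ℂ),
      (∀ T ∈ ball T₀ (s + r), HasDerivAt Φ (F (Φ T)) T) ∧
      ∀ T ∈ ball T₀ s, Φ T = φ T := by
  rw [add_comm s r, ← thickening_ball hr hs]
  exact stmt_13_general (locallyLipschitz_of_differentiable_complex hF) (convex_ball T₀ s) hr hφ
    fun T hT => hS (φ T) (hφS T hT)
end
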